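/- Let X be a topological space and 0 ≤ α ≤ ω₁. Then B_α(X, ℝ) is a Baire space if and only if B_α(X, Y) is a Baire space for every Banach space Y. -/

import Mathlib

open Set Filter Topology Ordinal TopologicalSpace

/-- A map `φ : K → M` is *almost open* if the image of every nonempty open set
has nonempty interior. -/
def AlmostOpenMap {K M : Type*} [TopologicalSpace K] [TopologicalSpace M] (φ : K → M) : Prop :=
  ∀ V : Set K, IsOpen V → V.Nonempty → (interior (φ '' V)).Nonempty

/-- The Baire class `B_α(X,Y)`: `B_0(X,Y)` is the set of continuous functions, and for `α > 0`,
`B_α(X,Y)` is the set of pointwise limits of sequences from `C(X,Y) ∪ ⋃_{β<α} B_β(X,Y)`. -/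
noncomputable def BaireClass (X Y : Type*) [TopologicalSpace X] [TopologicalSpace Y]
    (α : Ordinal.{0}) : Set (X → Y) :=
  if α = 0 then {f | Continuous f}
  else {f | ∃ g : ℕ → X → Y,
    (∀ n, Continuous (g n) ∨ ∃ β, ∃ _ : β < α, g n ∈ BaireClass X Y β) ∧
    ∀ x, Filter.Tendsto (fun n => g n x) Filter.atTop (nhds (f x))}
termination_by α

/-- `B_α(X,Y)` for `0 ≤ α ≤ ω₁`, where `B_{ω₁}(X,Y) = ⋃_{β<ω₁} B_β(X,Y)`. -/
noncomputable def BaireFun (X Y : Type*) [TopologicalSpace X] [TopologicalSpace Y]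
    (α : Ordinal.{0}) : Set (X → Y) :=
  if α = ω_ 1 then ⋃ β ∈ Set.Iio (ω_ 1 : Ordinal.{0}), BaireClass X Y β
  else BaireClass X Y α

/-- One refinement step: the family `S` of pairs (ball, open set) covers densely `V0`. -/
def PBInv {Z L : Type*} [MetricSpace Z] [TopologicalSpace L] (V0 : Set L)
    (S : Set ((Z × ℝ) × Set L)) : Prop :=
  (∀ p ∈ S, 0 < p.1.2 ∧ IsOpen p.2) ∧ S.PairwiseDisjoint Prod.snd ∧
    ∀ O : Set L, IsOpen O → (O ∩ V0).Nonempty → ∃ p ∈ S, (O ∩ p.2).Nonempty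

/-- The relation between two successive families. -/
def PBRel {Z L : Type*} [MetricSpace Z] [TopologicalSpace L] (W : Set (Z × L)) (ε : ℝ)
    (S : Set ((Z × ℝ) × Set L)) (p : (Z × ℝ) × Set L) : Prop :=
  p.1.2 ≤ ε ∧ Metric.closedBall p.1.1 p.1.2 ×ˢ p.2 ⊆ W ∧
    ∃ q ∈ S, p.2 ⊆ q.2 ∧ Metric.closedBall p.1.1 p.1.2 ⊆ Metric.ball q.1.1 q.1.2

theorem pb_step {Z L : Type*} [MetricSpace Z] [TopologicalSpace L] (V0 : Set L)
    (S : Set ((Z × ℝ) × Set L)) (hS : PBInv V0 S) (W : Set (Z × L)) (hW : IsOpen W)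
    (hWd : Dense W) (ε : ℝ) (hε : 0 < ε) :
    ∃ S' : Set ((Z × ℝ) × Set L), PBInv V0 S' ∧ ∀ p ∈ S', PBRel W ε S p := by
  obtain ⟨M, hM⟩ := zorn_subset
    {T : Set ((Z × ℝ) × Set L) | (∀ p ∈ T, (0 < p.1.2 ∧ IsOpen p.2) ∧ PBRel W ε S p) ∧
      T.PairwiseDisjoint Prod.snd} (by
    intro c hc hch
    refine ⟨⋃₀ c, ⟨?_, ?_⟩, fun s hs => subset_sUnion_of_mem hs⟩
    · rintro p ⟨t, ht, hp⟩
      exact (hc ht).1 p hp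
    · exact (pairwiseDisjoint_sUnion hch.directedOn).2 fun t ht => (hc ht).2)
  refine ⟨M, ⟨fun p hp => (hM.prop.1 p hp).1, hM.prop.2, ?_⟩, fun p hp => (hM.prop.1 p hp).2⟩
  intro O hO hOV
  by_contra hcon
  push Not at hcon
  obtain ⟨q, hq, f, hfO, hfq⟩ := hS.2.2 O hO hOV
  obtain ⟨hr, hqo⟩ := hS.1 q hq
  obtain ⟨⟨z, f'⟩, ⟨hz, hf'⟩, hzW⟩ := hWd.inter_open_nonempty
    (Metric.ball q.1.1 q.1.2 ×ˢ (O ∩ q.2)) (Metric.isOpen_ball.prod (hO.inter hqo))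
    ⟨(q.1.1, f), Metric.mem_ball_self hr, hfO, hfq⟩
  have hnb : W ∩ (Metric.ball q.1.1 q.1.2 ×ˢ (O ∩ q.2)) ∈ 𝓝 (z, f') :=
    (hW.inter (Metric.isOpen_ball.prod (hO.inter hqo))).mem_nhds ⟨hzW, hz, hf'⟩
  obtain ⟨A, hA, V, hV, hAV⟩ := mem_nhds_prod_iff.1 hnb
  obtain ⟨δ, hδ, hδA⟩ := Metric.nhds_basis_closedBall.mem_iff.1 hA
  obtain ⟨V', hV'V, hV'o, hfV'⟩ := mem_nhds_iff.1 hV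
  have hsub : Metric.closedBall z (min δ ε) ×ˢ V' ⊆
      W ∩ (Metric.ball q.1.1 q.1.2 ×ˢ (O ∩ q.2)) := by
    refine Subset.trans (prod_mono ?_ hV'V) hAV
    exact (Metric.closedBall_subset_closedBall (min_le_left _ _)).trans hδA
  have hmin : 0 < min δ ε := lt_min hδ hε
  have hV'O : V' ⊆ O ∩ q.2 := fun v hv =>
    (hsub (mk_mem_prod (Metric.mem_closedBall_self hmin.le) hv)).2.2
  have hball : Metric.closedBall z (min δ ε) ⊆ Metric.ball q.1.1 q.1.2 := fun v hv =>
    (hsub (mk_mem_prod hv hfV')).2.1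
  set p : (Z × ℝ) × Set L := ((z, min δ ε), V') with hp
  have hins : insert p M ∈ {T : Set ((Z × ℝ) × Set L) |
      (∀ p ∈ T, (0 < p.1.2 ∧ IsOpen p.2) ∧ PBRel W ε S p) ∧ T.PairwiseDisjoint Prod.snd} := by
    refine ⟨?_, ?_⟩
    · rintro p' (rfl | hp')
      · exact ⟨⟨hmin, hV'o⟩, min_le_right _ _, fun v hv => (hsub hv).1, q, hq,
          fun v hv => (hV'O hv).2, hball⟩
      · exact hM.prop.1 p' hp'
    · refine hM.prop.2.insert fun t ht _ => ?_
      rw [Set.disjoint_left]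
      intro v hv hvt
      have := hcon t ht
      exact (this ▸ (show v ∈ O ∩ t.2 from ⟨(hV'O hv).1, hvt⟩) : v ∈ (∅ : Set L))
  have hpM : p ∈ M := hM.le_of_ge hins (subset_insert _ _) (mem_insert _ _)
  have := hcon p hpM
  exact (this ▸ (show f' ∈ O ∩ p.2 from ⟨hf'.1, hfV'⟩) : f' ∈ (∅ : Set L))

/-- The product of a complete metric space and a Baire space is Baire. -/
theorem exists_mem_of_baire_prod {Z L : Type*} [MetricSpace Z] [CompleteSpace Z]
    [TopologicalSpace L] [BaireSpace L] (W : ℕ → Set (Z × L)) (hW : ∀ n, IsOpen (W n))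
    (hWd : ∀ n, Dense (W n)) (U : Set (Z × L)) (hU : IsOpen U) (hne : U.Nonempty) :
    ∃ p ∈ U, ∀ n, p ∈ W n := by
  obtain ⟨⟨z0, f0⟩, h0⟩ := hne
  obtain ⟨A, hA, V, hV, hAV⟩ := mem_nhds_prod_iff.1 (hU.mem_nhds h0)
  obtain ⟨r0, hr0, hrA⟩ := Metric.nhds_basis_ball.mem_iff.1 hA
  obtain ⟨V0, hV0V, hV0o, hfV0⟩ := mem_nhds_iff.1 hV
  have hstart : PBInv V0 ({((z0, r0), V0)} : Set ((Z × ℝ) × Set L)) :=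
    ⟨by rintro p rfl; exact ⟨hr0, hV0o⟩, pairwiseDisjoint_singleton _ _,
      fun O _ h => ⟨_, rfl, h⟩⟩
  choose! step hstep1 hstep2 using fun (n : ℕ) (S : Set ((Z × ℝ) × Set L)) (hS : PBInv V0 S) =>
    pb_step V0 S hS (W n) (hW n) (hWd n) (1 / ((n : ℝ) + 1)) Nat.one_div_pos_of_nat
  let T : ℕ → Set ((Z × ℝ) × Set L) := fun n =>
    Nat.rec {((z0, r0), V0)} (fun n S => step n S) n
  have hT0 : T 0 = {((z0, r0), V0)} := rfl
  have hTs : ∀ n, T (n + 1) = step n (T n) := fun n => rfl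
  have hTI : ∀ n, PBInv V0 (T n) := by
    intro n
    induction n with
    | zero => exact hstart
    | succ n ih => rw [hTs]; exact hstep1 n _ ih
  have hTR : ∀ n, ∀ p ∈ T (n + 1), PBRel (W n) (1 / ((n : ℝ) + 1)) (T n) p := by
    intro n
    rw [hTs]
    exact hstep2 n _ (hTI n)
  clear_value T
  let G : ℕ → Set L := fun n => (⋃ p ∈ T n, p.2) ∪ (closure V0)ᶜ
  have hG : Dense (⋂ n, G n) := by
    refine BaireSpace.baire_property G (fun n => ?_) (fun n => ?_)
    · exact (isOpen_biUnion fun p hp => ((hTI n).1 p hp).2).union isClosed_closure.isOpen_compl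
    · rw [dense_iff_inter_open]
      intro O hO ⟨x, hx⟩
      by_cases h : (O ∩ V0).Nonempty
      · obtain ⟨p, hp, y, hyO, hyp⟩ := (hTI n).2.2 O hO h
        exact ⟨y, hyO, Or.inl (mem_biUnion hp hyp)⟩
      · refine ⟨x, hx, Or.inr fun hc => h ?_⟩
        exact mem_closure_iff.1 hc O hO hx
  obtain ⟨f, hfV, hfG⟩ := hG.inter_open_nonempty V0 hV0o ⟨f0, hfV0⟩
  have hex : ∀ n, ∃ p ∈ T n, f ∈ p.2 := by
    intro n
    rcases mem_iInter.1 hfG n with h | h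
    · simpa using h
    · exact absurd (subset_closure hfV) h
  choose p hpT hpf using hex
  have hnest : ∀ n, Metric.closedBall (p (n+1)).1.1 (p (n+1)).1.2 ⊆
      Metric.ball (p n).1.1 (p n).1.2 := by
    intro n
    obtain ⟨-, -, q, hq, hsub, hb⟩ := hTR n _ (hpT (n+1))
    have : q = p n := (hTI n).2.1.elim_set hq (hpT n) f (hsub (hpf (n+1))) (hpf n)
    rwa [this] at hb
  have hanti : Antitone fun n => Metric.closedBall (p n).1.1 (p n).1.2 :=
    antitone_nat_of_succ_le fun n => (hnest n).trans Metric.ball_subset_closedBall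
  have hpos : ∀ n, 0 < (p n).1.2 := fun n => ((hTI n).1 _ (hpT n)).1
  have hd : ∀ n m, n ≤ m → (p m).1.1 ∈ Metric.closedBall (p n).1.1 (p n).1.2 := fun n m h =>
    hanti h (Metric.mem_closedBall_self (hpos m).le)
  have hlim : Tendsto (fun n => (p n).1.2) atTop (𝓝 0) := by
    rw [← tendsto_add_atTop_iff_nat 1]
    exact squeeze_zero (fun n => (hpos _).le) (fun n => (hTR n _ (hpT (n+1))).1)
      tendsto_one_div_add_atTop_nhds_zero_nat
  have hc : CauchySeq fun n => (p n).1.1 :=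
    cauchySeq_of_le_tendsto_0' (fun n => (p n).1.2)
      (fun n m h => by rw [dist_comm]; exact hd n m h) hlim
  obtain ⟨z, hz⟩ := cauchySeq_tendsto_of_complete hc
  have hzm : ∀ n, z ∈ Metric.closedBall (p n).1.1 (p n).1.2 := fun n =>
    Metric.isClosed_closedBall.mem_of_tendsto hz
      (eventually_atTop.2 ⟨n, fun m hm => hd n m hm⟩)
  refine ⟨(z, f), ?_, fun n => (hTR n _ (hpT (n+1))).2.1 ⟨hzm _, hpf _⟩⟩
  have h1 := hnest 0 (hzm 1)
  have h2 : p 0 = ((z0, r0), V0) := by have := hpT 0; rw [hT0] at this; exact this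
  rw [h2] at h1
  exact hAV ⟨hrA h1, hV0V hfV⟩

theorem exists_mem_of_baire_prod' {Z L : Type*} [TopologicalSpace Z]
    [IsCompletelyMetrizableSpace Z]
    [TopologicalSpace L] [BaireSpace L] (W : ℕ → Set (Z × L)) (hW : ∀ n, IsOpen (W n))
    (hWd : ∀ n, Dense (W n)) (U : Set (Z × L)) (hU : IsOpen U) (hne : U.Nonempty) :
    ∃ p ∈ U, ∀ n, p ∈ W n := by
  let _ := upgradeIsCompletelyMetrizable Z
  exact exists_mem_of_baire_prod W hW hWd U hU hne

theorem exists_injOn_mem {X R : Type*} (F : Finset X) (S : X → Set R)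
    (hS : ∀ x, (S x).Infinite) : ∃ a : X → R, (∀ x, a x ∈ S x) ∧ InjOn a F := by
  classical
  induction F using Finset.induction_on with
  | empty =>
    choose a ha using fun x => (hS x).nonempty
    exact ⟨a, ha, by simp⟩
  | insert x F hx ih =>
    obtain ⟨a, ha, hinj⟩ := ih
    obtain ⟨t, ht, htF⟩ := (hS x).exists_notMem_finset (F.image a)
    refine ⟨Function.update a x t, ?_, ?_⟩
    · intro y
      by_cases h : y = x
      · subst h; simpa using ht
      · simpa [h] using ha y
    · have hne : ∀ y ∈ F, y ≠ x := fun y hy h => hx (h ▸ hy)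
      have htF' : ∀ y ∈ F, a y ≠ t := by
        intro y hy h
        exact htF (Finset.mem_image.2 ⟨y, hy, h⟩)
      intro y hy w hw hyw
      simp only [Finset.coe_insert, mem_insert_iff, Finset.mem_coe] at hy hw
      rcases hy with rfl | hy <;> rcases hw with rfl | hw
      · rfl
      · simp [hne w hw] at hyw
        exact absurd hyw.symm (htF' w hw)
      · simp [hne y hy] at hyw
        exact absurd hyw (htF' y hy)
      · simp [hne y hy, hne w hw] at hyw
        exact hinj hy hw hyw

/-- Interpolation on a finite set, with control on a closed set `K`. -/
theorem exists_interp {X Y ι : Type*} [TopologicalSpace X] [T35Space X]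
    [NormedAddCommGroup Y] [NormedSpace ℝ Y] (F : Finset ι) (a : ι → X) (ha : InjOn a F)
    (v : ι → Y) (K : Set X) (hK : IsClosed K) (ε : ℝ) (hε : 0 ≤ ε)
    (hv : ∀ i ∈ F, a i ∈ K → ‖v i‖ ≤ ε) :
    ∃ u : X → Y, Continuous u ∧ (∀ i ∈ F, u (a i) = v i) ∧ ∀ x ∈ K, ‖u x‖ ≤ F.card * ε := by
  classical
  have hφ : ∀ i, ∃ φ : X → ℝ, Continuous φ ∧ (∀ x, 0 ≤ φ x ∧ φ x ≤ 1) ∧ φ (a i) = 1 ∧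
      (∀ j ∈ F, a j ≠ a i → φ (a j) = 0) ∧ (a i ∉ K → ∀ x ∈ K, φ x = 0) := by
    intro i
    obtain ⟨f, hf, hf0, hf1⟩ := CompletelyRegularSpace.completely_regular (a i)
      ((((F.image a).erase (a i) : Finset X) : Set X) ∪ (if a i ∈ K then ∅ else K))
      ((Finset.finite_toSet _).isClosed.union (by split_ifs <;> simp [hK]))
      (by split_ifs with h <;> simp [h])
    refine ⟨fun x => 1 - (f x : ℝ), by fun_prop, fun x => ?_, by simp [hf0], ?_, ?_⟩
    · have := (f x).2
      simp only [Set.mem_Icc] at this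
      constructor <;> linarith
    · intro j hj hji
      have : f (a j) = 1 := hf1 (Or.inl (by simpa [hji] using ⟨j, hj, rfl⟩))
      simp [this]
    · intro hi x hx
      have : f x = 1 := hf1 (Or.inr (by simpa [hi] using hx))
      simp [this]
  choose φ hφc hφ1 hφa hφ0 hφK using hφ
  refine ⟨fun x => ∑ i ∈ F, φ i x • v i, by fun_prop, ?_, ?_⟩
  · intro i hi
    show ∑ j ∈ F, φ j (a i) • v j = v i
    rw [Finset.sum_eq_single_of_mem i hi]
    · simp [hφa]
    · intro j hj hji
      rw [hφ0 j i hi fun h => hji (ha hj hi h.symm)]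
      simp
  · intro x hx
    calc ‖∑ i ∈ F, φ i x • v i‖ ≤ ∑ i ∈ F, ε := by
          refine norm_sum_le_of_le _ fun i hi => ?_
          by_cases h : a i ∈ K
          · rw [norm_smul, Real.norm_of_nonneg (hφ1 i x).1]
            calc φ i x * ‖v i‖ ≤ 1 * ‖v i‖ :=
                  mul_le_mul_of_nonneg_right (hφ1 i x).2 (norm_nonneg _)
              _ ≤ ε := by rw [one_mul]; exact hv i hi h
          · rw [hφK i h x hx]; simpa using hε
      _ = F.card * ε := by simp

theorem nhds_cont {Y : Type*} [NormedAddCommGroup Y] (g0 : C(ℝ, Y)) (A : Set C(ℝ, Y))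
    (hA : A ∈ 𝓝 g0) : ∃ (K : Set ℝ) (ε : ℝ), IsCompact K ∧ 0 < ε ∧
      ∀ g : C(ℝ, Y), (∀ t ∈ K, dist (g t) (g0 t) < ε) → g ∈ A := by
  rw [UniformSpace.mem_nhds_iff_symm] at hA
  obtain ⟨V, hV, -, hVA⟩ := hA
  obtain ⟨K, W, hK, hW, hsub⟩ := (ContinuousMap.mem_compactConvergence_entourage_iff V).1 hV
  obtain ⟨ε, hε, hεW⟩ := Metric.mem_uniformity_dist.1 hW
  refine ⟨K, ε, hK, hε, fun g hg => hVA (hsub fun t ht => hεW ?_)⟩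
  rw [dist_comm]
  exact hg t ht

theorem nhds_sub {X Y : Type*} [PseudoMetricSpace Y] (M : Set (X → Y)) (h : M)
    (D : Set M) (hD : D ∈ 𝓝 h) : ∃ (F : Finset X) (δ : ℝ), 0 < δ ∧
      ∀ h' : M, (∀ x ∈ F, dist (h'.1 x) (h.1 x) < δ) → h' ∈ D := by
  rw [nhds_subtype, mem_comap] at hD
  obtain ⟨O, hO, hOD⟩ := hD
  rw [nhds_pi, Filter.mem_pi] at hO
  obtain ⟨I, hI, t, ht, hsub⟩ := hO
  choose r hr hrt using fun x => Metric.mem_nhds_iff.1 (ht x)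
  obtain ⟨δ, hδ, hδr⟩ : ∃ δ : ℝ, 0 < δ ∧ ∀ x ∈ hI.toFinset, δ ≤ r x := by
    have := (hI.toFinset.eventually_all (l := 𝓝[>] (0:ℝ)) (p := fun x δ => δ ≤ r x)).2
      (fun x _ => nhdsWithin_le_nhds (Iic_mem_nhds (hr x)))
    obtain ⟨δ, h1, h2⟩ := (this.and self_mem_nhdsWithin).exists
    exact ⟨δ, h2, h1⟩
  refine ⟨hI.toFinset, δ, hδ, fun h' hh' => hOD (hsub fun x hx => hrt x ?_)⟩
  exact (hh' x (by simpa using hx)).trans_le (hδr x (by simpa using hx))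

theorem baire_transfer {X : Type*} [TopologicalSpace X] [T35Space X] {Y : Type*}
    [NormedAddCommGroup Y] [NormedSpace ℝ Y] [CompleteSpace Y]
    (L : Set (X → ℝ)) (M : Set (X → Y)) (hL : ∀ f, Continuous f → f ∈ L)
    (hM : ∀ f, Continuous f → f ∈ M) (hLM : ∀ f ∈ L, ∀ g : ℝ → Y, Continuous g → g ∘ f ∈ M)
    [BaireSpace L] : BaireSpace M := by
  classical
  let Φ : C(ℝ, Y) × L → M := fun p => ⟨p.1 ∘ p.2.1, hLM _ p.2.2 _ p.1.continuous⟩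
  have hΦ : Continuous Φ := by
    refine Continuous.subtype_mk (continuous_pi fun x => ?_) _
    have h1 : Continuous fun p : C(ℝ, Y) × L => p.2.1 x :=
      (continuous_apply x).comp (continuous_subtype_val.comp continuous_snd)
    exact continuous_fst.eval h1
  -- key: preimages of dense open sets are dense
  have key : ∀ D : Set M, IsOpen D → Dense D → Dense (Φ ⁻¹' D) := by
    intro D hDo hDd
    rw [dense_iff_inter_open]
    rintro O hO ⟨⟨g0, f0⟩, h0⟩
    obtain ⟨A, hA, V, hV, hAV⟩ := mem_nhds_prod_iff.1 (hO.mem_nhds h0)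
    obtain ⟨K, ε, hK, hε, hKA⟩ := nhds_cont g0 A hA
    obtain ⟨F, δ, hδ, hFV⟩ := nhds_sub L f0 V hV
    obtain ⟨a, haS, hainj⟩ := exists_injOn_mem F (fun x => Metric.ball (f0.1 x) δ)
      (fun x => infinite_of_mem_nhds _ (Metric.ball_mem_nhds _ hδ))
    -- the open set in `M`
    set η : ℝ := ε / (F.card + 1) with hη
    have hηpos : 0 < η := by positivity
    let U : Set M := {h | ∀ x ∈ F, ‖h.1 x - g0 (a x)‖ < η}
    have hU : IsOpen U := by
      have : U = ⋂ x ∈ F, {h : M | ‖h.1 x - g0 (a x)‖ < η} := by ext; simp [U]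
      rw [this]
      refine isOpen_biInter_finset fun x _ => isOpen_lt ?_ continuous_const
      exact (((continuous_apply x).comp continuous_subtype_val).sub continuous_const).norm
    have hUne : U.Nonempty := by
      obtain ⟨u, hu, hux, -⟩ := exists_interp F (id : X → X) (injOn_id _)
        (fun x => g0 (a x)) ∅ isClosed_empty 0 le_rfl (by simp)
      refine ⟨⟨u, hM u hu⟩, fun x hx => ?_⟩
      have := hux x hx
      simp only [id] at this
      simpa [this] using hηpos
    obtain ⟨h, hhU, hhD⟩ := hDd.inter_open_nonempty U hU hUne
    obtain ⟨F1, δ1, hδ1, hF1⟩ := nhds_sub M h D (hDo.mem_nhds hhD)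
    -- choose the values outside `F`
    obtain ⟨R, hR⟩ := (hK.union (F.image a).finite_toSet.isCompact).bddAbove
    obtain ⟨b, hbS, hbinj⟩ := exists_injOn_mem F1 (fun _ => Ioi R) (fun _ => Ioi_infinite R)
    let c : X → ℝ := fun x => if x ∈ F then a x else b x
    have haR : ∀ x ∈ F, a x ≤ R := fun x hx =>
      hR (Or.inr (by simpa using ⟨x, hx, rfl⟩))
    have hcinj : InjOn c (F ∪ F1 : Finset X) := by
      intro x hx y hy hxy
      simp only [Finset.coe_union, mem_union, Finset.mem_coe] at hx hy
      by_cases hxF : x ∈ F <;> by_cases hyF : y ∈ F <;> simp only [c, hxF, hyF, if_true, if_false] at hxy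
      · exact hainj hxF hyF hxy
      · have h1 := haR x hxF
        have h2 : R < b y := hbS y
        linarith
      · have h1 := haR y hyF
        have h2 : R < b x := hbS x
        linarith
      · exact hbinj (hx.resolve_left hxF) (hy.resolve_left hyF) hxy
    obtain ⟨f, hf, hfx, -⟩ := exists_interp (F ∪ F1) (id : X → X) (injOn_id _) c ∅ isClosed_empty
      0 le_rfl (by simp)
    -- correction supported near the points
    obtain ⟨u1, hu1, hu1x, hu1K⟩ := exists_interp F c (hcinj.mono (by simp))
      (fun x => h.1 x - g0 (c x)) K hK.isClosed η hηpos.le (by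
        intro x hx _
        have := hhU x hx
        simp only [c, hx, if_true]
        exact this.le)
    obtain ⟨u2, hu2, hu2x, hu2K⟩ := exists_interp (F ∪ F1) c hcinj
      (fun x => if x ∈ F then 0 else h.1 x - g0 (c x) - u1 (c x)) K hK.isClosed 0 le_rfl (by
        intro x hx hxK
        by_cases hxF : x ∈ F
        · simp [hxF]
        · exfalso
          have h1 : c x ≤ R := hR (Or.inl hxK)
          have h2 : R < b x := hbS x
          simp only [c, hxF, if_false] at h1
          linarith)
    let g : C(ℝ, Y) := ⟨fun t => g0 t + u1 t + u2 t, by fun_prop⟩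
    have hgc : ∀ x ∈ F ∪ F1, g (c x) = h.1 x := by
      intro x hx
      show g0 (c x) + u1 (c x) + u2 (c x) = h.1 x
      rw [hu2x x hx]
      by_cases hxF : x ∈ F
      · simp [hxF, hu1x x hxF]
      · simp [hxF]
    refine ⟨(g, ⟨f, hL f hf⟩), hAV ⟨hKA g fun t ht => ?_, hFV _ fun x hx => ?_⟩, hF1 _ fun x hx => ?_⟩
    · have h1 := hu1K t ht
      have h2 := hu2K t ht
      have h3 : u2 t = 0 := by simpa using h2
      have h4 : g t - g0 t = u1 t := by
        show g0 t + u1 t + u2 t - g0 t = u1 t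
        rw [h3]; abel
      rw [dist_eq_norm, h4]
      refine h1.trans_lt ?_
      rw [hη, mul_div_assoc', div_lt_iff₀ (by positivity)]
      nlinarith
    · have := hfx x (Finset.mem_union_left _ hx)
      simp only [id] at this
      have h2 := haS x
      simp only [this, c, hx, if_true]
      exact h2
    · have := hfx x (Finset.mem_union_right _ hx)
      simp only [id] at this
      have h2 : (Φ (g, ⟨f, hL f hf⟩)).1 x = h.1 x := by
        show g (f x) = h.1 x
        rw [this]
        exact hgc x (Finset.mem_union_right _ hx)
      rw [h2]
      simpa using hδ1
  refine ⟨fun D hDo hDd => ?_⟩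
  rw [dense_iff_inter_open]
  rintro U hU ⟨h, hh⟩
  obtain ⟨F, δ, hδ, hF⟩ := nhds_sub M h U (hU.mem_nhds hh)
  obtain ⟨a, -, hainj⟩ := exists_injOn_mem F (fun _ => (univ : Set ℝ)) (fun _ => infinite_univ)
  obtain ⟨f, hf, hfx, -⟩ := exists_interp F (id : X → X) (injOn_id _) a ∅ isClosed_empty
      0 le_rfl (by simp)
  obtain ⟨g, hg, hgx, -⟩ := exists_interp F a hainj h.1 ∅ isClosed_empty
      0 le_rfl (by simp)
  obtain ⟨p, hpU, hpD⟩ := exists_mem_of_baire_prod' (fun n => Φ ⁻¹' D n)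
    (fun n => (hDo n).preimage hΦ) (fun n => key _ (hDo n) (hDd n)) (Φ ⁻¹' U) (hU.preimage hΦ)
    ⟨(⟨g, hg⟩, ⟨f, hL f hf⟩), hF _ fun x hx => by
      have h1 := hfx x hx
      simp only [id] at h1
      have h2 : (Φ (⟨g, hg⟩, ⟨f, hL f hf⟩)).1 x = h.1 x := by
        show g (f x) = h.1 x
        rw [h1, hgx x hx]
      rw [h2]
      simpa using hδ⟩
  exact ⟨Φ p, hpU, mem_iInter.2 hpD⟩

theorem baireClass_cont {X Y : Type*} [TopologicalSpace X] [TopologicalSpace Y]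
    (α : Ordinal.{0}) (f : X → Y) (hf : Continuous f) : f ∈ BaireClass X Y α := by
  rw [BaireClass]
  split_ifs with h
  · exact hf
  · exact ⟨fun _ => f, fun _ => Or.inl hf, fun x => tendsto_const_nhds⟩

theorem baireClass_comp {X Y Z : Type*} [TopologicalSpace X] [TopologicalSpace Y]
    [TopologicalSpace Z] (g : Y → Z) (hg : Continuous g) (α : Ordinal.{0}) :
    ∀ f ∈ BaireClass X Y α, g ∘ f ∈ BaireClass X Z α := by
  induction α using WellFoundedLT.induction with
  | ind α ih =>
    intro f hf
    rw [BaireClass] at hf ⊢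
    split_ifs at hf ⊢ with h
    · exact hg.comp hf
    · obtain ⟨s, hs, hlim⟩ := hf
      refine ⟨fun n => g ∘ s n, fun n => ?_, fun x => (hg.tendsto _).comp (hlim x)⟩
      rcases hs n with h1 | ⟨β, hβ, h1⟩
      · exact Or.inl (hg.comp h1)
      · exact Or.inr ⟨β, hβ, ih β hβ _ h1⟩

theorem baireFun_cont {X Y : Type*} [TopologicalSpace X] [TopologicalSpace Y]
    (α : Ordinal.{0}) (f : X → Y) (hf : Continuous f) : f ∈ BaireFun X Y α := by
  rw [BaireFun]
  split_ifs with h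
  · exact mem_biUnion (x := (0 : Ordinal.{0})) (Ordinal.omega_pos 1) (baireClass_cont 0 f hf)
  · exact baireClass_cont α f hf

theorem baireFun_comp {X Y Z : Type*} [TopologicalSpace X] [TopologicalSpace Y]
    [TopologicalSpace Z] (g : Y → Z) (hg : Continuous g) (α : Ordinal.{0}) (f : X → Y)
    (hf : f ∈ BaireFun X Y α) : g ∘ f ∈ BaireFun X Z α := by
  rw [BaireFun] at hf ⊢
  split_ifs at hf ⊢ with h
  · obtain ⟨β, hβ, h1⟩ := mem_iUnion₂.1 hf
    exact mem_iUnion₂.2 ⟨β, hβ, baireClass_comp g hg β f h1⟩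
  · exact baireClass_comp g hg α f hf

theorem statement7 {X : Type*} [TopologicalSpace X] [T35Space X]
    (α : Ordinal.{0}) (hα : α ≤ ω_ 1) :
    BaireSpace ↥(BaireFun X ℝ α) ↔
      ∀ (Y : Type) (_ : NormedAddCommGroup Y) (_ : NormedSpace ℝ Y) (_ : CompleteSpace Y),
        BaireSpace ↥(BaireFun X Y α) := by
  constructor
  · intro h Y _ _ _
    exact baire_transfer (BaireFun X ℝ α) (BaireFun X Y α) (baireFun_cont α) (baireFun_cont α)
      (fun f hf g hg => baireFun_comp g hg α f hf)
  · intro h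
    exact h ℝ inferInstance inferInstance inferInstance
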